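/- arXiv:2503.13243 — 3 statements merged into one kernel-verified Lean document; each statement's English description precedes it below -/
import Mathlib

section
/- The subgroup H = ⟨η₁, η₂⟩, where η₁ = σ₁σ₂ρ and η₂ = σ₂, has order 2m²n; consequently H acts simply transitively on the arcs of Γ (this is the rotational group of an orientable reflexible map of type {n, 2m} with skeleton Γ). -/
/-- The lexicographic product `C_n[mK_1]`: vertices `(i,j)` with `(i₁,j₁) ~ (i₂,j₂)`
iff `i₂ = i₁ + 1` or `i₁ = i₂ + 1` (indices modulo `n`). -/
def lexCycle (n m : ℕ) : SimpleGraph (ZMod n × ZMod m) :=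
  SimpleGraph.fromRel (fun u v => v.1 = u.1 + 1)

/-- The representative in `{1, …, n}` of `i` modulo `n`. -/
def zrep {n : ℕ} (i : ZMod n) : ℕ := if i.val = 0 then n else i.val

/-!
In the coordinates `(i, w)` with `w = (-1) ^ i * (2 * j - 1)`, where the exponent `i` is taken in
`{1, …, n}`, the permutations `σ₁`, `ρ` and `σ₂` become `(i, w) ↦ (i + 1, -w)`,
`(i, w) ↦ (2 - i, w)` and `(i, w) ↦ (2 - i, -w - 6 + 4 * i)`. Hence `η₁` and `η₂` lie in the group
of all maps `(i, w) ↦ (ε * i + t, ε * w + a + b * i)` with `ε = ±1`. This group has order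
`2 * n * m ^ 2`, and exactly one of its elements takes the arc from `(0, 0)` to `(1, 0)` to a given
arc. The square of `η₂` and its commutator with `η₁` fix every `i` and translate `w`; since `m` is
odd, they generate all maps with `ε = 1` and `t = 0`, so `η₁` and `η₂` generate the whole group.
-/

open scoped commutatorElement

section SignedAffine

variable {R S : Type*} [CommRing R] [CommRing S] (c : R →+* S)

/-- The permutation `(i, w) ↦ (ε * i + t, ε * w + a + b * c i)` of `R × S`, where `ε = ±1`: an
affine map of the product whose linear part is `ε` times a shear along `S`. -/
def signedAffinePerm (ε : ℤˣ) (t : R) (a b : S) : Equiv.Perm (R × S) where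
  toFun v := (((ε : ℤ) : R) * v.1 + t, ((ε : ℤ) : S) * v.2 + a + b * c v.1)
  invFun v := (((ε : ℤ) : R) * (v.1 - t), ((ε : ℤ) : S) * (v.2 - a) - b * c (v.1 - t))
  left_inv v := by
    obtain rfl | rfl := Int.units_eq_one_or ε <;> ext <;>
      simp only [Units.val_neg, Units.val_one, Int.cast_neg, Int.cast_one, map_add, map_sub,
        map_neg, map_mul, map_one] <;> ring
  right_inv v := by
    obtain rfl | rfl := Int.units_eq_one_or ε <;> ext <;>
      simp only [Units.val_neg, Units.val_one, Int.cast_neg, Int.cast_one, map_sub,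
        map_neg, map_mul, map_one] <;> ring

theorem signedAffinePerm_apply (ε : ℤˣ) (t : R) (a b : S) (v : R × S) :
    signedAffinePerm c ε t a b v =
      (((ε : ℤ) : R) * v.1 + t, ((ε : ℤ) : S) * v.2 + a + b * c v.1) :=
  rfl

theorem signedAffinePerm_one_zero : signedAffinePerm c 1 0 0 0 = 1 := by
  ext v <;> simp [signedAffinePerm_apply]

theorem signedAffinePerm_mul (ε ε' : ℤˣ) (t t' : R) (a b a' b' : S) :
    signedAffinePerm c ε t a b * signedAffinePerm c ε' t' a' b' =
      signedAffinePerm c (ε * ε') (((ε : ℤ) : R) * t' + t)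
        (((ε : ℤ) : S) * a' + a + b * c t') (((ε : ℤ) : S) * b' + ((ε' : ℤ) : S) * b) := by
  ext v
  all_goals
    simp only [Equiv.Perm.mul_apply, signedAffinePerm_apply, map_add, map_mul, map_intCast,
      Units.val_mul, Int.cast_mul]
    ring

theorem signedAffinePerm_inv (ε : ℤˣ) (t : R) (a b : S) :
    (signedAffinePerm c ε t a b)⁻¹ =
      signedAffinePerm c ε (-(((ε : ℤ) : R) * t)) (b * c t - ((ε : ℤ) : S) * a) (-b) := by
  rw [inv_eq_iff_mul_eq_one, signedAffinePerm_mul, ← signedAffinePerm_one_zero c]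
  obtain rfl | rfl := Int.units_eq_one_or ε <;> simp

theorem signedAffinePerm_zpow {t : R} {b : S} (hbt : b * c t = 0) (a : S) (k : ℤ) :
    signedAffinePerm c 1 t a b ^ k = signedAffinePerm c 1 (k * t) (k * a) (k * b) := by
  induction k with
  | zero => simp [signedAffinePerm_one_zero]
  | succ k ih =>
    rw [zpow_add_one, ih, signedAffinePerm_mul]
    congr 1 <;> push_cast
    · ring
    · linear_combination (k : S) * hbt
    · ring
  | pred k ih =>
    rw [zpow_sub_one, ih, signedAffinePerm_inv, signedAffinePerm_mul]
    congr 1 <;> push_cast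
    · ring
    · simp only [map_neg, map_mul, map_one]
      linear_combination (1 + (k : S)) * hbt
    · ring

theorem commutator_signedAffinePerm (t : R) (a b x y : S) :
    ⁅signedAffinePerm c 1 t a b, signedAffinePerm c 1 0 x y⁆ =
      signedAffinePerm c 1 0 (-(y * c t)) 0 := by
  rw [commutatorElement_def]
  simp only [signedAffinePerm_inv, signedAffinePerm_mul]
  congr 1 <;>
    simp only [Units.val_one, Int.cast_one, mul_one, one_mul, map_neg, map_zero] <;> ring

/-- The group of all permutations `signedAffinePerm c ε t a b`; in suitable coordinates it is the
rotational group of the map. -/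
def signedAffineGroup : Subgroup (Equiv.Perm (R × S)) where
  carrier := Set.range fun p : ℤˣ × R × S × S => signedAffinePerm c p.1 p.2.1 p.2.2.1 p.2.2.2
  mul_mem' := by
    rintro _ _ ⟨p, rfl⟩ ⟨q, rfl⟩
    exact ⟨(_, _, _, _), (signedAffinePerm_mul c ..).symm⟩
  one_mem' := ⟨(1, 0, 0, 0), signedAffinePerm_one_zero c⟩
  inv_mem' := by
    rintro _ ⟨⟨ε, t, a, b⟩, rfl⟩
    exact ⟨(_, _, _, _), (signedAffinePerm_inv c ε t a b).symm⟩

variable {c}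

theorem mem_signedAffineGroup {g : Equiv.Perm (R × S)} :
    g ∈ signedAffineGroup c ↔ ∃ ε t a b, signedAffinePerm c ε t a b = g := by
  change g ∈ Set.range _ ↔ _
  simp

theorem exists_mem_signedAffineGroup_apply_base {u w : R × S} {δ : ℤˣ}
    (h : w.1 = u.1 + ((δ : ℤ) : R)) :
    ∃ g ∈ signedAffineGroup c, g (0, 0) = u ∧ g (1, 0) = w := by
  refine ⟨_, mem_signedAffineGroup.2 ⟨δ, u.1, u.2, w.2 - u.2, rfl⟩, ?_, ?_⟩
  · simp [signedAffinePerm_apply]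
  · simp [signedAffinePerm_apply, Prod.ext_iff, h, add_comm]

theorem exists_mem_signedAffineGroup_apply_eq {u₁ w₁ u₂ w₂ : R × S} {δ₁ δ₂ : ℤˣ}
    (h₁ : w₁.1 = u₁.1 + ((δ₁ : ℤ) : R)) (h₂ : w₂.1 = u₂.1 + ((δ₂ : ℤ) : R)) :
    ∃ g ∈ signedAffineGroup c, g u₁ = u₂ ∧ g w₁ = w₂ := by
  obtain ⟨g₁, hg₁, rfl, rfl⟩ := exists_mem_signedAffineGroup_apply_base (c := c) h₁
  obtain ⟨g₂, hg₂, rfl, rfl⟩ := exists_mem_signedAffineGroup_apply_base (c := c) h₂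
  exact ⟨g₂ * g₁⁻¹, mul_mem hg₂ (inv_mem hg₁), by simp, by simp⟩

theorem intCast_units_injective (hR : (-1 : R) ≠ 1) :
    Function.Injective fun ε : ℤˣ => ((ε : ℤ) : R) := by
  intro ε ε' h
  obtain rfl | rfl := Int.units_eq_one_or ε <;> obtain rfl | rfl := Int.units_eq_one_or ε' <;>
    simp_all [eq_comm]

theorem signedAffinePerm_params_eq (hR : (-1 : R) ≠ 1) {ε ε' : ℤˣ} {t t' : R} {a b a' b' : S}
    (h₀ : signedAffinePerm c ε t a b (0, 0) = signedAffinePerm c ε' t' a' b' (0, 0))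
    (h₁ : signedAffinePerm c ε t a b (1, 0) = signedAffinePerm c ε' t' a' b' (1, 0)) :
    ε = ε' ∧ t = t' ∧ a = a' ∧ b = b' := by
  obtain ⟨rfl, rfl⟩ : t = t' ∧ a = a' := by simpa [signedAffinePerm_apply] using h₀
  obtain ⟨hε, rfl⟩ : ((ε : ℤ) : R) = ((ε' : ℤ) : R) ∧ b = b' := by
    simpa [signedAffinePerm_apply] using h₁
  exact ⟨intCast_units_injective hR hε, rfl, rfl, rfl⟩

theorem eq_of_mem_signedAffineGroup_of_apply_base (hR : (-1 : R) ≠ 1) {g g' : Equiv.Perm (R × S)}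
    (hg : g ∈ signedAffineGroup c) (hg' : g' ∈ signedAffineGroup c)
    (h₀ : g (0, 0) = g' (0, 0)) (h₁ : g (1, 0) = g' (1, 0)) : g = g' := by
  obtain ⟨ε, t, a, b, rfl⟩ := mem_signedAffineGroup.1 hg
  obtain ⟨ε', t', a', b', rfl⟩ := mem_signedAffineGroup.1 hg'
  obtain ⟨rfl, rfl, rfl, rfl⟩ := signedAffinePerm_params_eq hR h₀ h₁
  rfl

theorem eq_one_of_mem_signedAffineGroup_of_fixed (hR : (-1 : R) ≠ 1) {u w : R × S} {δ : ℤˣ}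
    (h : w.1 = u.1 + ((δ : ℤ) : R)) {g : Equiv.Perm (R × S)} (hg : g ∈ signedAffineGroup c)
    (hu : g u = u) (hw : g w = w) : g = 1 := by
  obtain ⟨k, hk, rfl, rfl⟩ := exists_mem_signedAffineGroup_apply_base (c := c) h
  exact mul_eq_right.1 (eq_of_mem_signedAffineGroup_of_apply_base hR (mul_mem hg hk) hk hu hw)

variable (c) in
theorem card_signedAffineGroup (hR : (-1 : R) ≠ 1) :
    Nat.card (signedAffineGroup c) = 2 * Nat.card S ^ 2 * Nat.card R := by
  have hinj : Function.Injective fun p : ℤˣ × R × S × S =>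
      signedAffinePerm c p.1 p.2.1 p.2.2.1 p.2.2.2 := by
    intro p q h
    obtain ⟨hε, ht, ha, hb⟩ :=
      signedAffinePerm_params_eq hR (DFunLike.congr_fun h (0, 0)) (DFunLike.congr_fun h (1, 0))
    exact Prod.ext hε (Prod.ext ht (Prod.ext ha hb))
  calc Nat.card (signedAffineGroup c) = Nat.card (ℤˣ × R × S × S) :=
        Nat.card_range_of_injective hinj
    _ = 2 * Nat.card S ^ 2 * Nat.card R := by
        simp only [Nat.card_prod, Nat.card_eq_fintype_card (α := ℤˣ), Fintype.card_units_int]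
        ring

theorem signedAffineGroup_le_of_shear_mem (hR : Function.Surjective (Int.cast : ℤ → R))
    {H : Subgroup (Equiv.Perm (R × S))} (hshear : ∀ x y, signedAffinePerm c 1 0 x y ∈ H)
    {t : R} {a b a' b' : S} (hA : signedAffinePerm c 1 1 a b ∈ H)
    (hB : signedAffinePerm c (-1) t a' b' ∈ H) : signedAffineGroup c ≤ H := by
  have hA₀ : signedAffinePerm c 1 1 0 0 ∈ H := by
    convert mul_mem (hshear (-a + b) (-b)) hA using 1
    simp [signedAffinePerm_mul]
  have htranslation (r : R) : signedAffinePerm c 1 r 0 0 ∈ H := by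
    obtain ⟨k, rfl⟩ := hR r
    simpa [signedAffinePerm_zpow] using H.zpow_mem hA₀ k
  have hpos (r : R) (x y : S) : signedAffinePerm c 1 r x y ∈ H := by
    convert mul_mem (hshear (x - y * c r) y) (htranslation r) using 1
    simp [signedAffinePerm_mul]
  intro g hg
  obtain ⟨ε, r, x, y, rfl⟩ := mem_signedAffineGroup.1 hg
  obtain rfl | rfl := Int.units_eq_one_or ε
  · exact hpos r x y
  · convert mul_mem (hpos (r - t) (x - a' - (b' - y) * c t) (b' - y)) hB using 1
    simp only [signedAffinePerm_mul]
    congr 1 <;>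
      simp only [Units.val_neg, Units.val_one, Int.cast_one, one_mul] <;> ring

theorem exists_intCast_mul_eq_of_isUnit (hS : Function.Surjective (Int.cast : ℤ → S)) {u : S}
    (hu : IsUnit u) (x : S) : ∃ k : ℤ, (k : S) * u = x := by
  obtain ⟨d, hd⟩ := hu.exists_left_inv
  obtain ⟨k, hk⟩ := hS (x * d)
  exact ⟨k, by rw [hk, mul_assoc, hd, mul_one]⟩

theorem shear_mem_of_mem (hS : Function.Surjective (Int.cast : ℤ → S))
    {H : Subgroup (Equiv.Perm (R × S))} {a b x₀ y₀ : S} (hy₀ : IsUnit y₀)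
    (hA : signedAffinePerm c 1 1 a b ∈ H) (hshear : signedAffinePerm c 1 0 x₀ y₀ ∈ H) (x y : S) :
    signedAffinePerm c 1 0 x y ∈ H := by
  have hcomm : signedAffinePerm c 1 0 (-y₀) 0 ∈ H := by
    rw [← mul_one y₀, ← map_one c, ← commutator_signedAffinePerm c 1 a b x₀ y₀]
    exact mul_mem (mul_mem (mul_mem hA hshear) (inv_mem hA)) (inv_mem hshear)
  have hconst (z : S) : signedAffinePerm c 1 0 z 0 ∈ H := by
    obtain ⟨k, rfl⟩ := exists_intCast_mul_eq_of_isUnit hS hy₀.neg z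
    simpa [signedAffinePerm_zpow] using H.zpow_mem hcomm k
  obtain ⟨k, rfl⟩ := exists_intCast_mul_eq_of_isUnit hS hy₀ y
  convert mul_mem (hconst (x - k * x₀)) (H.zpow_mem hshear k) using 1
  simp [signedAffinePerm_zpow, signedAffinePerm_mul]

theorem closure_signedAffinePerm_pair (hR : Function.Surjective (Int.cast : ℤ → R))
    (hS : Function.Surjective (Int.cast : ℤ → S)) (t : R) (a b a' : S) {b' : S}
    (hb' : IsUnit (2 * b')) :
    Subgroup.closure {signedAffinePerm c 1 1 a b, signedAffinePerm c (-1) t a' b'} =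
      signedAffineGroup c := by
  set H := Subgroup.closure {signedAffinePerm c 1 1 a b, signedAffinePerm c (-1) t a' b'}
  have hA : signedAffinePerm c 1 1 a b ∈ H := Subgroup.subset_closure (by simp)
  have hB : signedAffinePerm c (-1) t a' b' ∈ H := Subgroup.subset_closure (by simp)
  have hBB : signedAffinePerm c 1 0 (b' * c t) (-(2 * b')) ∈ H := by
    convert mul_mem hB hB using 1
    simp [signedAffinePerm_mul, two_mul, add_comm]
  refine le_antisymm ?_
    (signedAffineGroup_le_of_shear_mem hR (shear_mem_of_mem hS hb'.neg hA hBB) hA hB)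
  rw [Subgroup.closure_le, Set.pair_subset_iff]
  exact ⟨mem_signedAffineGroup.2 ⟨_, _, _, _, rfl⟩, mem_signedAffineGroup.2 ⟨_, _, _, _, rfl⟩⟩

end SignedAffine

section Conjugation

variable {α β : Type*} {e : α ≃ β}

theorem permCongrHom_eq_iff {g : Equiv.Perm α} {g' : Equiv.Perm β} :
    e.permCongrHom g = g' ↔ ∀ x, e (g x) = g' (e x) := by
  rw [Equiv.ext_iff, ← e.forall_congr_right]
  simp

theorem exists_mem_apply_eq_of_map_permCongrHom {H : Subgroup (Equiv.Perm α)} {u₁ w₁ u₂ w₂ : α}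
    (h : ∃ g ∈ H.map e.permCongrHom.toMonoidHom, g (e u₁) = e u₂ ∧ g (e w₁) = e w₂) :
    ∃ g ∈ H, g u₁ = u₂ ∧ g w₁ = w₂ := by
  obtain ⟨_, ⟨g, hg, rfl⟩, hu, hw⟩ := h
  exact ⟨g, hg, by simpa using hu, by simpa using hw⟩

theorem map_closure_eq_signedAffineGroup {R S : Type*} [CommRing R] [CommRing S] {c : R →+* S}
    {e : α ≃ R × S} {σ₁ σ₂ ρ : Equiv.Perm α}
    (hσ₁ : ∀ v, e (σ₁ v) = ((e v).1 + 1, -(e v).2))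
    (hσ₂ : ∀ v, e (σ₂ v) = signedAffinePerm c (-1) 2 (-6) 4 (e v))
    (hρ : ∀ v, e (ρ v) = (2 - (e v).1, (e v).2))
    (hR : Function.Surjective (Int.cast : ℤ → R)) (hS : Function.Surjective (Int.cast : ℤ → S))
    (h2 : IsUnit (2 : S)) :
    (Subgroup.closure {ρ * σ₂ * σ₁, σ₂}).map e.permCongrHom.toMonoidHom = signedAffineGroup c := by
  have hη₁ : e.permCongrHom (ρ * σ₂ * σ₁) = signedAffinePerm c 1 1 (-2) 4 := by
    refine permCongrHom_eq_iff.2 fun v => ?_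
    simp only [Equiv.Perm.mul_apply, hρ, hσ₂, hσ₁, signedAffinePerm_apply, map_add, map_one,
      Units.val_neg, Units.val_one, Int.cast_neg, Int.cast_one]
    ext <;> ring
  have h8 : IsUnit (2 * 4 : S) := by
    convert h2.pow 3
    norm_num
  rw [MonoidHom.map_closure, Set.image_pair, MulEquiv.coe_toMonoidHom, hη₁,
    permCongrHom_eq_iff.2 hσ₂]
  exact closure_signedAffinePerm_pair hR hS 2 (-2) 4 (-6) h8

end Conjugation

section Zrep

variable {n : ℕ}

theorem zrep_natCast {k : ℕ} (hk : 0 < k) (hkn : k ≤ n) : zrep (k : ZMod n) = k := by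
  obtain rfl | hlt := hkn.eq_or_lt
  · simp [zrep]
  · simp [zrep, ZMod.val_natCast_of_lt hlt, hk.ne']

theorem zrep_zero : zrep (0 : ZMod n) = n := by
  simp [zrep]

variable [NeZero n]

theorem natCast_zrep (i : ZMod n) : (zrep i : ZMod n) = i := by
  unfold zrep
  split_ifs with h
  · rw [ZMod.natCast_self, (ZMod.val_eq_zero i).1 h]
  · exact ZMod.natCast_zmod_val i

theorem zrep_pos (i : ZMod n) : 0 < zrep i := by
  unfold zrep
  split_ifs with h
  · exact NeZero.pos n
  · exact Nat.pos_of_ne_zero h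

theorem zrep_le (i : ZMod n) : zrep i ≤ n := by
  unfold zrep
  split_ifs with h
  · exact le_rfl
  · exact (ZMod.val_lt i).le

theorem zrep_one : zrep (1 : ZMod n) = 1 := by
  simpa using zrep_natCast (n := n) one_pos NeZero.one_le

theorem zrep_add_one {i : ZMod n} (hi : i ≠ 0) : zrep (i + 1) = zrep i + 1 := by
  have hlt : zrep i < n := (zrep_le i).lt_of_ne fun h => hi <| by
    rw [← natCast_zrep i, h, ZMod.natCast_self]
  simpa [natCast_zrep] using zrep_natCast (zrep i).succ_pos hlt

theorem two_le_zrep {i : ZMod n} (hi : i ≠ 1) : 2 ≤ zrep i :=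
  Nat.lt_of_le_of_ne (zrep_pos i) fun h => hi <| by rw [← natCast_zrep i, ← h, Nat.cast_one]

theorem zrep_two_sub_add_zrep {i : ZMod n} (hi : i ≠ 1) : zrep (2 - i) + zrep i = n + 2 := by
  have hge := two_le_zrep hi
  have hle := zrep_le i
  have hcast : ((n + 2 - zrep i : ℕ) : ZMod n) = 2 - i := by
    rw [Nat.cast_sub (by omega)]
    simp [natCast_zrep]
  rw [← hcast, zrep_natCast (by omega) (by omega)]
  omega

theorem castHom_eq_natCast_zrep {m : ℕ} (hmn : m ∣ n) (i : ZMod n) :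
    ZMod.castHom hmn (ZMod m) i = (zrep i : ZMod m) := by
  rw [← map_natCast (ZMod.castHom hmn (ZMod m)), natCast_zrep]

theorem neg_one_pow_zrep_two_sub {A : Type*} [Ring A] (hn : Odd n) {i : ZMod n} (hi : i ≠ 1) :
    (-1 : A) ^ zrep (2 - i) = -(-1) ^ zrep i := by
  have hodd : Odd (zrep (2 - i) + zrep i) := by
    rw [zrep_two_sub_add_zrep hi]
    exact hn.add_even even_two
  obtain h | h := (zrep i).even_or_odd
  · rw [h.neg_one_pow, (Nat.odd_add.1 hodd |>.2 h).neg_one_pow]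
  · rw [h.neg_one_pow, (Nat.odd_add'.1 hodd |>.1 h).neg_one_pow, neg_neg]

end Zrep

section Twist

variable {n m : ℕ} [Invertible (2 : ZMod m)]

/-- The coordinate change `(i, j) ↦ (i, w)` with `w = (-1) ^ i * (2 * j - 1)`, the exponent `i`
being represented in `{1, …, n}`. -/
def twist : Equiv.Perm (ZMod n × ZMod m) where
  toFun v := (v.1, (-1) ^ zrep v.1 * (2 * v.2 - 1))
  invFun v := (v.1, ⅟2 * ((-1) ^ zrep v.1 * v.2 + 1))
  left_inv v := by
    ext
    · rfl
    · simp [← mul_assoc, ← mul_pow]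
  right_inv v := by
    ext
    · rfl
    · simp [← mul_assoc, ← mul_pow]

theorem twist_apply (i : ZMod n) (j : ZMod m) :
    twist (i, j) = (i, (-1) ^ zrep i * (2 * j - 1)) :=
  rfl

variable [NeZero n]

theorem twist_sigma₁ (hn : Odd n) (i : ZMod n) (j : ZMod m) :
    twist (if i = 0 then (i + 1, 1 - j) else (i + 1, j)) =
      ((twist (i, j)).1 + 1, -(twist (i, j)).2) := by
  split_ifs with hi
  · subst hi
    simp only [twist_apply, zero_add, zrep_zero, zrep_one, hn.neg_one_pow]
    congr 1
    ring
  · simp only [twist_apply, zrep_add_one hi]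
    congr 1
    ring

theorem twist_rho (hn : Odd n) (i : ZMod n) (j : ZMod m) :
    twist (if i = 1 then (2 - i, j) else (2 - i, 1 - j)) =
      (2 - (twist (i, j)).1, (twist (i, j)).2) := by
  split_ifs with hi
  · subst hi
    norm_num [twist_apply]
  · simp only [twist_apply, neg_one_pow_zrep_two_sub hn hi]
    congr 1
    ring

theorem twist_sigma₂ (hn : Odd n) (hmn : m ∣ n) (i : ZMod n) (j : ZMod m) :
    twist (if i = 1 then (2 - i, 2 - j)
        else (2 - i, j + (-1 : ZMod m) ^ (zrep i - 1) * ((2 * zrep i - 3 : ℕ) : ZMod m))) =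
      signedAffinePerm (ZMod.castHom hmn (ZMod m)) (-1) 2 (-6) 4 (twist (i, j)) := by
  simp only [signedAffinePerm_apply, twist_apply, castHom_eq_natCast_zrep, Units.val_neg,
    Units.val_one, Int.cast_neg, Int.cast_one]
  split_ifs with hi
  · subst hi
    rw [twist_apply, show (2 - 1 : ZMod n) = 1 by norm_num, zrep_one, Nat.cast_one]
    congr 1 <;> ring
  · obtain ⟨k, hk⟩ : ∃ k, zrep i = k + 2 := Nat.exists_eq_add_of_le' (two_le_zrep hi)
    have hsq : ((-1 : ZMod m) ^ k) * (-1) ^ k = 1 := by rw [← mul_pow]; simp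
    rw [twist_apply, neg_one_pow_zrep_two_sub hn hi, hk, show 2 * (k + 2) - 3 = 2 * k + 1 by omega,
      show k + 2 - 1 = k + 1 by omega]
    ext
    · ring
    · push_cast
      linear_combination (2 + 4 * (k : ZMod m)) * hsq

end Twist

theorem exists_unit_of_lexCycle_adj {n m : ℕ} {u v : ZMod n × ZMod m}
    (h : (lexCycle n m).Adj u v) : ∃ δ : ℤˣ, v.1 = u.1 + ((δ : ℤ) : ZMod n) := by
  obtain ⟨-, h | h⟩ := (SimpleGraph.fromRel_adj ..).1 h
  · exact ⟨1, by simp [h]⟩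
  · exact ⟨-1, by simp [h]⟩

theorem statement13
    (m s n : ℕ) (hm : 3 ≤ m) (hmo : Odd m) (hs : 0 < s) (hso : Odd s) (hn : n = s * m)
    (σ₁ σ₂ ρ : Equiv.Perm (ZMod n × ZMod m))
    (hσ₁ : ∀ (i : ZMod n) (j : ZMod m),
      σ₁ (i, j) = if i = 0 then (i + 1, 1 - j) else (i + 1, j))
    (hσ₂ : ∀ (i : ZMod n) (j : ZMod m),
      σ₂ (i, j) = if i = 1 then (2 - i, 2 - j)
        else (2 - i, j + (-1 : ZMod m) ^ (zrep i - 1) * ((2 * zrep i - 3 : ℕ) : ZMod m)))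
    (hρ : ∀ (i : ZMod n) (j : ZMod m),
      ρ (i, j) = if i = 1 then (2 - i, j) else (2 - i, 1 - j))
    :
    Nat.card (Subgroup.closure {ρ * σ₂ * σ₁, σ₂} : Subgroup (Equiv.Perm (ZMod n × ZMod m))) = 2 * m ^ 2 * n ∧
      (∀ u₁ w₁ u₂ w₂ : ZMod n × ZMod m,
        (lexCycle n m).Adj u₁ w₁ → (lexCycle n m).Adj u₂ w₂ →
        ∃ g ∈ Subgroup.closure {ρ * σ₂ * σ₁, σ₂}, g u₁ = u₂ ∧ g w₁ = w₂) ∧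
      (∀ u w : ZMod n × ZMod m, (lexCycle n m).Adj u w →
        ∀ g ∈ Subgroup.closure {ρ * σ₂ * σ₁, σ₂}, g u = u → g w = w → g = 1) := by
  have hno : Odd n := hn ▸ hso.mul hmo
  have hmn : m ∣ n := hn ▸ Dvd.intro_left s rfl
  have : Fact (2 < n) := ⟨hm.trans (Nat.le_of_dvd hno.pos hmn)⟩
  have : NeZero n := ⟨hno.pos.ne'⟩
  have h2 : IsUnit (2 : ZMod m) := ZMod.isUnit_iff_coprime 2 m |>.2 <| Nat.coprime_two_left.2 hmo
  let := h2.invertible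
  have hmap := map_closure_eq_signedAffineGroup (e := twist) (c := ZMod.castHom hmn (ZMod m))
    (fun _ => (congrArg twist (hσ₁ ..)).trans (twist_sigma₁ hno ..))
    (fun _ => (congrArg twist (hσ₂ ..)).trans (twist_sigma₂ hno hmn ..))
    (fun _ => (congrArg twist (hρ ..)).trans (twist_rho hno ..))
    ZMod.intCast_surjective ZMod.intCast_surjective h2
  refine ⟨?_, fun u₁ w₁ u₂ w₂ h₁ h₂ => ?_, fun u w h g hg hu hw => ?_⟩
  · rw [← Subgroup.card_map_of_injective (f := twist.permCongrHom.toMonoidHom)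
      (MulEquiv.injective _), hmap, card_signedAffineGroup _ ZMod.neg_one_ne_one,
      Nat.card_zmod, Nat.card_zmod]
  · obtain ⟨⟨_, h₁⟩, _, h₂⟩ := exists_unit_of_lexCycle_adj h₁, exists_unit_of_lexCycle_adj h₂
    exact exists_mem_apply_eq_of_map_permCongrHom (e := twist) <| hmap ▸
      exists_mem_signedAffineGroup_apply_eq (u₁ := twist u₁) (w₁ := twist w₁) h₁ h₂
  · obtain ⟨_, h⟩ := exists_unit_of_lexCycle_adj h
    exact (MulEquiv.map_eq_one_iff _).1 <| eq_one_of_mem_signedAffineGroup_of_fixed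
      (u := twist u) (w := twist w) ZMod.neg_one_ne_one h (hmap ▸ Subgroup.mem_map_of_mem _ hg)
      ((permCongrHom_eq_iff.1 rfl u).symm.trans (congrArg twist hu))
      ((permCongrHom_eq_iff.1 rfl w).symm.trans (congrArg twist hw))
end

section
/- The permutation σ₂ fixes the vertex v = (1,1) of Γ, the cyclic group ⟨σ₂⟩ acts transitively on the 2m neighbours of v, the subgroup G = ⟨σ₁, σ₂⟩ acts transitively on the arcs of Γ, and the stabiliser in G of the arc ((1,1),(2,1)) has order 2. -/
/-!
Unroll the graph to the strip `ℤ × ZMod m`, measuring fibre coordinates from the centre `h = 1/2`,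
so that `j ↦ 1 - j` becomes a change of sign and `(x + n, J)` lies over the same vertex as
`(x, -J)`. Then `σ₁` lifts to `x ↦ x + 1`, and `σ₂` to `(x, J) ↦ (2 - x, -J + f x)` with
`f (x + 2) = -f x`; as `n ≡ 2` modulo `4`, such an `f` also satisfies `f (x + n) = -f x`, which is
what compatibility with the turn requires.

The square of `σ₂` translates the fibres by an antiperiodic function that vanishes at odd `x`. As
`2` is invertible modulo `m`, its powers and their conjugates by `σ₁` give all translations by
functions of antiperiod `2`. Such a function takes arbitrary values at `1` and `2`, which yields
transitivity, and is determined by them. Since every element of the group lifts to an affine map of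
the strip with translation part of antiperiod `2`, one that fixes an arc is the identity or
reflects every fibre, and `σ₁ ^ n` up to a translation is such a reflection.
-/

open Function

section Antiperiodic

variable {A : Type*} [AddCommGroup A]

/-- The function `ℤ → A` with antiperiod `2` whose values at `1` and `2` are `a` and `b`; the
residues modulo `4` are those distinguished in the definition of `σ₂`. -/
def antiperiodicExt (a b : A) (x : ℤ) : A :=
  if x % 4 = 1 then a else if x % 4 = 2 then b else if x % 4 = 3 then -a else -b

@[simp]
lemma antiperiodicExt_one (a b : A) : antiperiodicExt a b 1 = a := rfl

@[simp]
lemma antiperiodicExt_two (a b : A) : antiperiodicExt a b 2 = b := rfl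

lemma antiperiodic_antiperiodicExt (a b : A) : Antiperiodic (antiperiodicExt a b) 2 := by
  intro x
  unfold antiperiodicExt
  split_ifs <;> first | omega | simp

lemma eq_antiperiodicExt {f : ℤ → A} (hf : Antiperiodic f 2) :
    f = antiperiodicExt (f 1) (f 2) := by
  have h0 : f 0 = -f 2 := hf.sub_eq 2
  have h3 : f 3 = -f 1 := hf 1
  funext x
  have hmod : f (x % 4) = f x := by
    have := hf.periodic_two_mul.sub_zsmul_eq (x := x) (x / 4)
    rwa [show x - (x / 4) • (2 * 2) = x % 4 by rw [smul_eq_mul]; omega] at this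
  have hcases : x % 4 = 0 ∨ x % 4 = 1 ∨ x % 4 = 2 ∨ x % 4 = 3 := by omega
  rw [← hmod]
  rcases hcases with h | h | h | h <;> simp [antiperiodicExt, h, h0, h3]

@[simp]
lemma antiperiodicExt_zero_zero : antiperiodicExt (0 : A) 0 = 0 :=
  (eq_antiperiodicExt (f := 0) fun _ => neg_zero.symm).symm

lemma antiperiodicExt_self (a : A) (x : ℤ) :
    antiperiodicExt a a x = if x % 4 = 0 ∨ x % 4 = 3 then -a else a := by
  unfold antiperiodicExt
  split_ifs <;> first | omega | rfl

lemma antiperiodicExt_neg (a b : A) (x : ℤ) :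
    antiperiodicExt (-a) (-b) x = -antiperiodicExt a b x := by
  unfold antiperiodicExt
  split_ifs <;> rfl

lemma antiperiodicExt_add (a b a' b' : A) (x : ℤ) :
    antiperiodicExt (a + a') (b + b') x = antiperiodicExt a b x + antiperiodicExt a' b' x := by
  unfold antiperiodicExt
  split_ifs <;> first | rfl | exact neg_add _ _

lemma antiperiodicExt_nsmul (k : ℕ) (a b : A) :
    antiperiodicExt (k • a) (k • b) = k • antiperiodicExt a b := by
  funext x
  unfold antiperiodicExt
  rw [Pi.smul_apply]
  split_ifs <;> first | rfl | exact (smul_neg _ _).symm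

lemma antiperiodicExt_sub_one (a b : A) (x : ℤ) :
    antiperiodicExt a b (x - 1) = antiperiodicExt (-b) a x := by
  unfold antiperiodicExt
  split_ifs <;> first | omega | simp

lemma antiperiodicExt_two_sub (a b : A) (x : ℤ) :
    antiperiodicExt a b (2 - x) = antiperiodicExt a (-b) x := by
  unfold antiperiodicExt
  split_ifs <;> first | omega | simp

lemma antiperiodic_of_emod_four_eq_two {f : ℤ → A} (hf : Antiperiodic f 2) {n : ℤ}
    (hn : n % 4 = 2) : Antiperiodic f n := by
  have hodd := hf.int_odd_mul_antiperiodic (n / 4)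
  rwa [Int.cast_id, show n / 4 * (2 * 2) + 2 = n by omega] at hodd

lemma antiperiodic_apply_units_mul_add {f : ℤ → A} {c : ℤ} (hf : Antiperiodic f c) (e : ℤˣ)
    (k x : ℤ) : f (e * (x + c) + k) = -f (e * x + k) := by
  obtain rfl | rfl := Int.units_eq_one_or e
  · rw [← hf]
    congr 1
    simp only [Units.val_one]
    ring
  · rw [← hf.sub_eq]
    congr 1
    simp only [Units.val_neg, Units.val_one]
    ring

end Antiperiodic

section Representatives

variable {n : ℕ}

lemma zrep_intCast {x : ℤ} (hx : x ∈ Set.Icc 1 (n : ℤ)) : (zrep (x : ZMod n) : ℤ) = x := by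
  obtain ⟨h1, hn⟩ := hx
  lift x to ℕ using by omega
  rw [zrep, Int.cast_natCast, ZMod.val_natCast]
  obtain hlt | rfl : x < n ∨ x = n := by omega
  · rw [Nat.mod_eq_of_lt hlt, if_neg (by omega)]
  · rw [Nat.mod_self, if_pos rfl]

lemma injOn_intCast_Icc : Set.InjOn (Int.cast : ℤ → ZMod n) (Set.Icc 1 n) := fun x hx y hy hxy => by
  rw [← zrep_intCast hx, hxy, zrep_intCast hy]

lemma exists_mem_Icc_eq_add_mul (hn : n ≠ 0) (y : ℤ) :
    ∃ x ∈ Set.Icc 1 (n : ℤ), ∃ t : ℤ, y = x + n * t := by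
  have hmod := Int.emod_add_mul_ediv (y - 1) n
  have hnonneg := Int.emod_nonneg (y - 1) (b := n) (by omega)
  have hlt := Int.emod_lt_of_pos (y - 1) (b := n) (by omega)
  exact ⟨(y - 1) % n + 1, ⟨by omega, by omega⟩, (y - 1) / n, by omega⟩

end Representatives

section Strip

variable {A : Type*} [AddCommGroup A]

/-- The covering of `ZMod n × A` by the strip `ℤ × A`. Fibre coordinates on the strip are measured
from the centre `h`, with a sign that changes each time `x` leaves a window
`{1 + q * n, …, (q + 1) * n}`. -/
def stripProj (n : ℕ) (h : A) (p : ℤ × A) : ZMod n × A :=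
  (p.1, h + ((p.1 - 1) / n).negOnePow • p.2)

/-- The affine self-map `(x, J) ↦ (e x + k, d J + f x)` of the strip, with signs `e` and `d`. -/
def stripMap (e : ℤˣ) (k : ℤ) (d : ℤˣ) (f : ℤ → A) (p : ℤ × A) : ℤ × A :=
  (e * p.1 + k, d • p.2 + f p.1)

variable {n : ℕ} {h : A}

lemma stripProj_add_mul (hn : n ≠ 0) (h : A) (x t : ℤ) (J : A) :
    stripProj n h (x + n * t, J) = stripProj n h (x, t.negOnePow • J) := by
  have hdiv : (x + n * t - 1) / n = (x - 1) / n + t := by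
    rw [← Int.add_mul_ediv_left _ _ (by exact_mod_cast hn), sub_add_eq_add_sub]
  simp [stripProj, hdiv, Int.negOnePow_add, mul_smul]

lemma stripProj_of_mem_Icc {x : ℤ} (hx : x ∈ Set.Icc 1 (n : ℤ)) (h J : A) :
    stripProj n h (x, J) = ((x : ZMod n), h + J) := by
  have hdiv : (x - 1) / n = 0 := Int.ediv_eq_zero_of_lt (by grind) (by grind)
  simp [stripProj, hdiv]

lemma stripProj_right_injective (n : ℕ) (h : A) (x : ℤ) :
    Injective fun J => stripProj n h (x, J) := fun J L hJL => by
  simpa [stripProj] using hJL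

lemma exists_stripProj_eq (h : A) {u : ZMod n × A} {x : ℤ} (hx : u.1 = x) :
    ∃ J, stripProj n h (x, J) = u :=
  ⟨((x - 1) / n).negOnePow • (u.2 - h), by ext <;> simp [stripProj, hx, smul_smul]⟩

lemma stripProj_surjective (n : ℕ) (h : A) : Surjective (stripProj n h) := fun u =>
  let ⟨x, hx⟩ := ZMod.intCast_surjective u.1
  let ⟨J, hJ⟩ := exists_stripProj_eq h hx.symm
  ⟨(x, J), hJ⟩

lemma eq_of_semiconj_stripProj {Φ : ℤ × A → ℤ × A} {g g' : Equiv.Perm (ZMod n × A)}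
    (hg : Semiconj (stripProj n h) Φ g) (hg' : Semiconj (stripProj n h) Φ g') : g = g' :=
  DFunLike.coe_injective <| (stripProj_surjective n h).injective_comp_right <|
    hg.comp_eq.symm.trans hg'.comp_eq

lemma stripMap_one_zero_one_zero : stripMap 1 0 1 (0 : ℤ → A) = id := by
  ext <;> simp [stripMap]

lemma stripMap_comp (e e' : ℤˣ) (k k' : ℤ) (d d' : ℤˣ) (f f' : ℤ → A) :
    stripMap e k d f ∘ stripMap e' k' d' f' =
      stripMap (e * e') (e * k' + k) (d * d') (fun x => d • f' x + f (e' * x + k')) := by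
  ext p
  · simp only [stripMap, comp_apply, Units.val_mul]; ring
  · simp only [stripMap, comp_apply, smul_add, mul_smul, add_assoc]

lemma stripMap_rightInverse (e : ℤˣ) (k : ℤ) (d : ℤˣ) (f : ℤ → A) :
    RightInverse (stripMap e (-(e * k)) d fun x => -(d • f (e * x + -(e * k))))
      (stripMap e k d f) := by
  rw [rightInverse_iff_comp, stripMap_comp, ← stripMap_one_zero_one_zero]
  have he : (e * e : ℤ) = 1 := by exact_mod_cast Int.units_coe_mul_self e
  congr 1
  · exact Int.units_mul_self e
  · linear_combination -k * he
  · exact Int.units_mul_self d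
  · funext x
    simp [smul_smul]

lemma iterate_stripMap_rotation (k : ℕ) : (stripMap 1 1 1 (0 : ℤ → A))^[k] = stripMap 1 k 1 0 := by
  induction k with
  | zero => exact stripMap_one_zero_one_zero.symm
  | succ k ih =>
    rw [iterate_succ', ih, stripMap_comp]
    congr 1
    · simp
    · funext x
      simp

lemma iterate_stripMap_translation (f : ℤ → A) (k : ℕ) :
    (stripMap 1 0 1 f)^[k] = stripMap 1 0 1 (k • f) := by
  induction k with
  | zero => simp [stripMap_one_zero_one_zero]
  | succ k ih =>
    rw [iterate_succ', ih, stripMap_comp]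
    congr 1
    funext x
    simp [succ_nsmul]

lemma stripProj_stripMap_add_mul (hn : n ≠ 0) (e : ℤˣ) (k t : ℤ) (d : ℤˣ) (f : ℤ → A)
    (p : ℤ × A) :
    stripProj n h (stripMap e (k + n * t) d f p) =
      stripProj n h (stripMap e k (t.negOnePow * d) (t.negOnePow • f) p) := by
  simp only [stripMap, ← add_assoc, stripProj_add_mul hn, smul_add, mul_smul, Pi.smul_apply]

lemma apply_fst_of_semiconj {e : ℤˣ} {k : ℤ} {d : ℤˣ} {f : ℤ → A}
    {g : ZMod n × A → ZMod n × A} (hg : Semiconj (stripProj n h) (stripMap e k d f) g)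
    (u : ZMod n × A) : (g u).1 = (e : ℤ) * u.1 + k := by
  obtain ⟨p, rfl⟩ := stripProj_surjective n h u
  rw [← hg]
  simp [stripProj, stripMap]

lemma semiconj_stripMap_of_forall_mem_Icc (hn : n ≠ 0) {e : ℤˣ} {k : ℤ} {d : ℤˣ} {f : ℤ → A}
    (hf : Antiperiodic f n) {g : ZMod n × A → ZMod n × A}
    (hg : ∀ x ∈ Set.Icc 1 (n : ℤ), ∀ J,
      stripProj n h (stripMap e k d f (x, J)) = g (stripProj n h (x, J))) :
    Semiconj (stripProj n h) (stripMap e k d f) g := by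
  rintro ⟨y, J⟩
  obtain ⟨x, hx, t, rfl⟩ := exists_mem_Icc_eq_add_mul hn y
  have hsign : (e * t : ℤ).negOnePow = t.negOnePow := by
    obtain rfl | rfl := Int.units_eq_one_or e <;> simp
  have hft : f (x + n * t) = t.negOnePow • f x := by
    simpa [mul_comm, Units.smul_def] using hf.add_zsmul_eq (x := x) t
  calc
    stripProj n h (stripMap e k d f (x + n * t, J))
      = stripProj n h (e * x + k + n * (e * t), d • J + t.negOnePow • f x) := by
        rw [← hft, stripMap]; ring_nf
    _ = stripProj n h (stripMap e k d f (x, t.negOnePow • J)) := by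
        rw [stripProj_add_mul hn, hsign, stripMap, smul_add, smul_smul t.negOnePow t.negOnePow,
          Int.units_mul_self, one_smul, smul_comm]
    _ = g (stripProj n h (x + n * t, J)) := by rw [hg x hx, stripProj_add_mul hn]

variable (n h) in
/-- The permutations of `ZMod n × A` that lift to an affine map of the strip whose translation part
has antiperiod `2`. -/
def stripSubgroup : Subgroup (Equiv.Perm (ZMod n × A)) where
  carrier := {g | ∃ (e : ℤˣ) (k : ℤ) (d : ℤˣ) (f : ℤ → A), Antiperiodic f 2 ∧
    Semiconj (stripProj n h) (stripMap e k d f) g}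
  one_mem' := ⟨1, 0, 1, 0, fun _ => by simp, by
    rw [stripMap_one_zero_one_zero]; exact Semiconj.id_right⟩
  mul_mem' := by
    rintro g g' ⟨e, k, d, f, hf, hg⟩ ⟨e', k', d', f', hf', hg'⟩
    refine ⟨_, _, _, _, fun x => ?_, stripMap_comp e e' k k' d d' f f' ▸ hg.comp_right hg'⟩
    rw [hf' x, antiperiodic_apply_units_mul_add hf e' k' x, smul_neg, neg_add]
  inv_mem' := by
    rintro g ⟨e, k, d, f, hf, hg⟩
    refine ⟨_, _, _, _, fun x => ?_, hg.inverses_right (stripMap_rightInverse e k d f) g.left_inv⟩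
    rw [antiperiodic_apply_units_mul_add hf e (-(e * k)) x, smul_neg]

lemma exists_semiconj_of_fixes_fst (hn : 2 < n) {g : Equiv.Perm (ZMod n × A)}
    (hg : g ∈ stripSubgroup n h) {J L : A} (h₁ : (g (stripProj n h (1, J))).1 = 1)
    (h₂ : (g (stripProj n h (2, L))).1 = 2) :
    ∃ (d : ℤˣ) (f : ℤ → A), Antiperiodic f 2 ∧
      Semiconj (stripProj n h) (stripMap 1 0 d f) g := by
  obtain ⟨e, k, d, f, hf, hg⟩ := hg
  have hdvd₁ : (n : ℤ) ∣ e + k - 1 := by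
    rw [← ZMod.intCast_eq_intCast_iff_dvd_sub]
    simpa [apply_fst_of_semiconj hg, stripProj, eq_comm] using h₁
  have hdvd₂ : (n : ℤ) ∣ e * 2 + k - 2 := by
    rw [← ZMod.intCast_eq_intCast_iff_dvd_sub]
    simpa [apply_fst_of_semiconj hg, stripProj, eq_comm] using h₂
  have he : e = 1 := by
    refine (Int.units_eq_one_or e).resolve_right ?_
    rintro rfl
    have hdiff : ((-1 : ℤˣ) + k - 1 : ℤ) - ((-1 : ℤˣ) * 2 + k - 2) = 2 := by push_cast; ring
    have := Int.le_of_dvd two_pos (hdiff ▸ dvd_sub hdvd₁ hdvd₂)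
    omega
  subst he
  obtain ⟨t, rfl⟩ : (n : ℤ) ∣ k := by simpa using hdvd₁
  refine ⟨t.negOnePow * d, t.negOnePow • f, fun x => ?_, fun p => ?_⟩
  · rw [Pi.smul_apply, Pi.smul_apply, hf x, smul_neg]
  · rw [← hg, ← stripProj_stripMap_add_mul (by omega), zero_add]

lemma eq_one_or_semiconj_of_fixes_arc (hn : 2 < n) {g : Equiv.Perm (ZMod n × A)}
    (hg : g ∈ stripSubgroup n h) {J L : A}
    (h₁ : g (stripProj n h (1, J)) = stripProj n h (1, J))
    (h₂ : g (stripProj n h (2, L)) = stripProj n h (2, L)) :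
    g = 1 ∨ Semiconj (stripProj n h)
      (stripMap 1 0 (-1) (antiperiodicExt (J + J) (L + L))) g := by
  obtain ⟨d, f, hf, hg⟩ := exists_semiconj_of_fixes_fst hn hg (by rw [h₁]; simp [stripProj])
    (by rw [h₂]; simp [stripProj])
  have hJ : d • J + f 1 = J := stripProj_right_injective n h 1 <| by
    simpa [stripMap] using (hg (1, J)).trans h₁
  have hL : d • L + f 2 = L := stripProj_right_injective n h 2 <| by
    simpa [stripMap] using (hg (2, L)).trans h₂
  rw [eq_antiperiodicExt hf] at hg
  obtain rfl | rfl := Int.units_eq_one_or d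
  · left
    have hf₁ : f 1 = 0 := by simpa using hJ
    have hf₂ : f 2 = 0 := by simpa using hL
    refine eq_of_semiconj_stripProj hg ?_
    rw [hf₁, hf₂, antiperiodicExt_zero_zero, stripMap_one_zero_one_zero]
    exact Semiconj.id_right
  · right
    have hf₁ : f 1 = J + J := by simpa [neg_add_eq_iff_eq_add] using hJ
    have hf₂ : f 2 = L + L := by simpa [neg_add_eq_iff_eq_add] using hL
    rwa [hf₁, hf₂] at hg

end Strip

section Formulas

variable {R : Type*} [CommRing R] {n : ℕ} {h : R} {σ : ZMod n × R → ZMod n × R}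

lemma semiconj_of_rotation_formula (hn : n ≠ 0) (hh : h + h = 1)
    (hσ : ∀ i j, σ (i, j) = if i = 0 then (i + 1, 1 - j) else (i + 1, j)) :
    Semiconj (stripProj n h) (stripMap 1 1 1 0) σ := by
  refine semiconj_stripMap_of_forall_mem_Icc hn (fun _ => by simp) fun x hx J => ?_
  have hmap : stripMap 1 1 1 0 (x, J) = (x + 1, J) := by simp [stripMap]
  have hzero : (x : ZMod n) = 0 ↔ x = n := by
    rw [← injOn_intCast_Icc.eq_iff hx ⟨by omega, le_rfl⟩]
    simp
  simp only [hmap, stripProj_of_mem_Icc hx, hσ, hzero]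
  obtain rfl | hne := eq_or_ne x n
  · have hturn := stripProj_add_mul hn h 1 1 J
    rw [mul_one, add_comm (1 : ℤ), stripProj_of_mem_Icc ⟨le_rfl, hx.1⟩] at hturn
    rw [hturn, if_pos rfl]
    ext
    · simp
    · simp only [Int.negOnePow_one, Units.neg_smul, one_smul, ← hh]
      ring
  · rw [stripProj_of_mem_Icc ⟨by grind, by grind⟩, if_neg hne]
    simp

lemma semiconj_of_reflection_formula (hn : n % 4 = 2) (hh : h + h = 1)
    (hσ : ∀ i j, σ (i, j) = if i = 1 then (2 - i, 2 - j)
      else if zrep i % 4 = 0 ∨ zrep i % 4 = 3 then (2 - i, j + 1) else (2 - i, j - 1)) :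
    Semiconj (stripProj n h) (stripMap (-1) 2 (-1) (antiperiodicExt 1 1)) σ := by
  have hn0 : n ≠ 0 := by omega
  refine semiconj_stripMap_of_forall_mem_Icc hn0
    (antiperiodic_of_emod_four_eq_two (antiperiodic_antiperiodicExt 1 1) (by omega))
    fun x hx J => ?_
  have hmap : stripMap (-1) 2 (-1) (antiperiodicExt 1 1) (x, J) =
      (2 - x, -J + antiperiodicExt 1 1 x) := by
    simp [stripMap, neg_add_eq_sub]
  have hone : (x : ZMod n) = 1 ↔ x = 1 := by
    rw [← injOn_intCast_Icc.eq_iff hx ⟨le_rfl, by omega⟩, Int.cast_one]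
  simp only [hmap, stripProj_of_mem_Icc hx, hσ, hone]
  obtain rfl | hne := eq_or_ne x 1
  · rw [if_pos rfl, antiperiodicExt_one, show (2 - 1 : ℤ) = 1 by norm_num,
      stripProj_of_mem_Icc hx]
    ext
    · norm_num
    · linear_combination hh
  · have hrep : zrep (x : ZMod n) % 4 = 0 ∨ zrep (x : ZMod n) % 4 = 3 ↔
        x % 4 = 0 ∨ x % 4 = 3 := by
      have := zrep_intCast hx
      omega
    have hturn := stripProj_add_mul hn0 h (2 - x) 1 (-(-J + antiperiodicExt 1 1 x))
    rw [mul_one, stripProj_of_mem_Icc ⟨by grind, by grind⟩, Int.negOnePow_one, Units.neg_smul,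
      one_smul, neg_neg] at hturn
    rw [← hturn, if_neg hne, antiperiodicExt_self]
    simp only [hrep]
    split_ifs <;> ext <;> push_cast <;> simp <;> ring

end Formulas

section Lifts

variable {A : Type*} [AddCommGroup A] {n : ℕ} {h a b a' b' : A} {σ g g' : Equiv.Perm (ZMod n × A)}

lemma semiconj_reflection_sq
    (hσ : Semiconj (stripProj n h) (stripMap (-1) 2 (-1) (antiperiodicExt a b)) σ) :
    Semiconj (stripProj n h) (stripMap 1 0 1 (antiperiodicExt 0 (-(b + b)))) ⇑(σ ^ 2) := by
  have hsq : stripMap (-1) 2 (-1) (antiperiodicExt a b) ∘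
      stripMap (-1) 2 (-1) (antiperiodicExt a b) =
        stripMap 1 0 1 (antiperiodicExt 0 (-(b + b))) := by
    rw [stripMap_comp]
    congr 1
    funext x
    have hx : ((-1 : ℤˣ) : ℤ) * x + 2 = 2 - x := by push_cast; ring
    rw [hx, antiperiodicExt_two_sub, Units.neg_smul, one_smul, ← antiperiodicExt_neg,
      ← antiperiodicExt_add, neg_add_cancel, neg_add]
  rw [← hsq, pow_two]
  exact hσ.comp_right hσ

lemma semiconj_translation_mul
    (hg : Semiconj (stripProj n h) (stripMap 1 0 1 (antiperiodicExt a b)) g)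
    (hg' : Semiconj (stripProj n h) (stripMap 1 0 1 (antiperiodicExt a' b')) g') :
    Semiconj (stripProj n h) (stripMap 1 0 1 (antiperiodicExt (a + a') (b + b'))) ⇑(g' * g) := by
  intro p
  rw [Equiv.Perm.mul_apply, ← hg, ← hg']
  simp [stripMap, antiperiodicExt_add, add_assoc]

lemma semiconj_translation_conj_rotation
    (hσ : Semiconj (stripProj n h) (stripMap 1 1 1 0) σ)
    (hg : Semiconj (stripProj n h) (stripMap 1 0 1 (antiperiodicExt a b)) g) :
    Semiconj (stripProj n h) (stripMap 1 0 1 (antiperiodicExt (-b) a)) ⇑(σ * g * σ⁻¹) := by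
  rintro ⟨x, J⟩
  have hx : σ⁻¹ (stripProj n h (x, J)) = stripProj n h (x - 1, J) := by
    rw [Equiv.Perm.inv_eq_iff_eq, ← hσ]
    simp [stripMap]
  rw [Equiv.Perm.mul_apply, Equiv.Perm.mul_apply, hx, ← hg, ← hσ]
  simp [stripMap, antiperiodicExt_sub_one]

lemma closure_le_stripSubgroup
    (hσ : Semiconj (stripProj n h) (stripMap 1 1 1 0) σ)
    (hg : Semiconj (stripProj n h) (stripMap (-1) 2 (-1) (antiperiodicExt a b)) g) :
    Subgroup.closure {σ, g} ≤ stripSubgroup n h := by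
  rw [Subgroup.closure_le]
  rintro _ (rfl | rfl)
  · exact ⟨1, 1, 1, 0, fun _ => by simp, hσ⟩
  · exact ⟨-1, 2, -1, _, antiperiodic_antiperiodicExt a b, hg⟩

end Lifts

section Generators

variable {n m : ℕ} {h : ZMod m} {σ₁ σ₂ : Equiv.Perm (ZMod n × ZMod m)}

lemma exists_add_self_eq_one (hm : Odd m) : ∃ h : ZMod m, h + h = 1 := by
  obtain ⟨t, rfl⟩ := hm
  refine ⟨((t + 1 : ℕ) : ZMod (2 * t + 1)), ?_⟩
  have : ((2 * t + 1 : ℕ) : ZMod (2 * t + 1)) = 0 := ZMod.natCast_self _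
  push_cast at this ⊢
  linear_combination this

lemma exists_pow_semiconj_translation [NeZero m] (hh : h + h = 1)
    (h₂ : Semiconj (stripProj n h) (stripMap (-1) 2 (-1) (antiperiodicExt 1 1)) σ₂)
    (b : ZMod m) :
    ∃ k : ℕ, Semiconj (stripProj n h) (stripMap 1 0 1 (antiperiodicExt 0 b)) ⇑(σ₂ ^ k) := by
  refine ⟨2 * (-(h * b)).val, ?_⟩
  have hk : (-(h * b)).val • (-(1 + 1)) = b := by
    rw [nsmul_eq_mul, ZMod.natCast_zmod_val]
    linear_combination b * hh
  have hpow := (semiconj_reflection_sq h₂).iterate_right (-(h * b)).val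
  rwa [iterate_stripMap_translation, ← antiperiodicExt_nsmul, smul_zero, hk,
    Equiv.Perm.iterate_eq_pow, ← pow_mul] at hpow

lemma exists_mem_closure_semiconj_translation [NeZero m] (hh : h + h = 1)
    (h₁ : Semiconj (stripProj n h) (stripMap 1 1 1 0) σ₁)
    (h₂ : Semiconj (stripProj n h) (stripMap (-1) 2 (-1) (antiperiodicExt 1 1)) σ₂)
    (a b : ZMod m) :
    ∃ g ∈ Subgroup.closure {σ₁, σ₂},
      Semiconj (stripProj n h) (stripMap 1 0 1 (antiperiodicExt a b)) g := by
  obtain ⟨k, hk⟩ := exists_pow_semiconj_translation hh h₂ b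
  obtain ⟨l, hl⟩ := exists_pow_semiconj_translation hh h₂ (-a)
  have hmem₁ : σ₁ ∈ Subgroup.closure {σ₁, σ₂} := Subgroup.subset_closure (by simp)
  have hmem₂ : σ₂ ∈ Subgroup.closure {σ₁, σ₂} := Subgroup.subset_closure (by simp)
  refine ⟨σ₂ ^ k * (σ₁ * σ₂ ^ l * σ₁⁻¹), ?_, ?_⟩
  · exact mul_mem (pow_mem hmem₂ k) (mul_mem (mul_mem hmem₁ (pow_mem hmem₂ l)) (inv_mem hmem₁))
  · simpa using semiconj_translation_mul (semiconj_translation_conj_rotation h₁ hl) hk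

lemma exists_map_base_arc_eq [NeZero n] [NeZero m] (hh : h + h = 1)
    (h₁ : Semiconj (stripProj n h) (stripMap 1 1 1 0) σ₁)
    (h₂ : Semiconj (stripProj n h) (stripMap (-1) 2 (-1) (antiperiodicExt 1 1)) σ₂)
    {u w : ZMod n × ZMod m} (huw : w.1 = u.1 + 1) :
    ∃ g ∈ Subgroup.closure {σ₁, σ₂},
      g (stripProj n h (1, 0)) = u ∧ g (stripProj n h (2, 0)) = w := by
  set k := (u.1 - 1).val with hk
  have hu : u.1 = ((1 + k : ℤ) : ZMod n) := by simp [hk]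
  obtain ⟨J, hJ⟩ := exists_stripProj_eq h hu
  obtain ⟨L, hL⟩ := exists_stripProj_eq h (u := w) (x := 2 + k) (by
    rw [huw, hu]; push_cast; ring)
  obtain ⟨g, hg, hgJL⟩ := exists_mem_closure_semiconj_translation hh h₁ h₂ J L
  have hrot := h₁.iterate_right k
  rw [iterate_stripMap_rotation, Equiv.Perm.iterate_eq_pow] at hrot
  refine ⟨σ₁ ^ k * g, mul_mem (pow_mem (Subgroup.subset_closure (by simp)) k) hg, ?_, ?_⟩
  · rw [Equiv.Perm.mul_apply, ← hgJL, ← hrot, ← hJ]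
    simp [stripMap]
  · rw [Equiv.Perm.mul_apply, ← hgJL, ← hrot, ← hL]
    simp [stripMap]

lemma lexCycle_adj_fst {u w : ZMod n × ZMod m} (huw : (lexCycle n m).Adj u w) :
    w.1 = u.1 + 1 ∨ u.1 = w.1 + 1 :=
  ((SimpleGraph.fromRel_adj _ _ _).1 huw).2

lemma exists_map_arc_eq [NeZero n] [NeZero m] (hh : h + h = 1)
    (h₁ : Semiconj (stripProj n h) (stripMap 1 1 1 0) σ₁)
    (h₂ : Semiconj (stripProj n h) (stripMap (-1) 2 (-1) (antiperiodicExt 1 1)) σ₂)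
    {u₁ w₁ u₂ w₂ : ZMod n × ZMod m} (huw₁ : (lexCycle n m).Adj u₁ w₁)
    (huw₂ : (lexCycle n m).Adj u₂ w₂) :
    ∃ g ∈ Subgroup.closure {σ₁, σ₂}, g u₁ = u₂ ∧ g w₁ = w₂ := by
  have hbase {u w : ZMod n × ZMod m} (huw : (lexCycle n m).Adj u w) :
      ∃ g ∈ Subgroup.closure {σ₁, σ₂},
        g (stripProj n h (1, 0)) = u ∧ g (stripProj n h (2, 0)) = w := by
    obtain hw | hu := lexCycle_adj_fst huw
    · exact exists_map_base_arc_eq hh h₁ h₂ hw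
    · have hσ₂ : (σ₂ w).1 = (σ₂ u).1 + 1 := by
        rw [apply_fst_of_semiconj h₂, apply_fst_of_semiconj h₂, hu]
        push_cast
        ring
      obtain ⟨g, hg, hgu, hgw⟩ := exists_map_base_arc_eq hh h₁ h₂ hσ₂
      refine ⟨σ₂⁻¹ * g, mul_mem (inv_mem (Subgroup.subset_closure (by simp))) hg, ?_, ?_⟩
      · rw [Equiv.Perm.mul_apply, Equiv.Perm.inv_eq_iff_eq, hgu]
      · rw [Equiv.Perm.mul_apply, Equiv.Perm.inv_eq_iff_eq, hgw]
  obtain ⟨g₁, hg₁, rfl, rfl⟩ := hbase huw₁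
  obtain ⟨g₂, hg₂, rfl, rfl⟩ := hbase huw₂
  exact ⟨g₂ * g₁⁻¹, mul_mem hg₂ (inv_mem hg₁), by simp, by simp⟩

lemma exists_zpow_map_neighbor_eq [NeZero m] (hh : h + h = 1)
    (h₂ : Semiconj (stripProj n h) (stripMap (-1) 2 (-1) (antiperiodicExt 1 1)) σ₂)
    {v w w' : ZMod n × ZMod m} (hv : v.1 = 1) (hw : (lexCycle n m).Adj v w)
    (hw' : (lexCycle n m).Adj v w') : ∃ k : ℤ, (σ₂ ^ k) w = w' := by
  have hfibre {w : ZMod n × ZMod m} (hw : w.1 = 2) :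
      ∃ k : ℤ, (σ₂ ^ k) (stripProj n h (2, 0)) = w := by
    obtain ⟨L, rfl⟩ := exists_stripProj_eq h (u := w) (x := 2) (by simpa using hw)
    obtain ⟨k, hk⟩ := exists_pow_semiconj_translation hh h₂ L
    exact ⟨k, by rw [zpow_natCast, ← hk]; simp [stripMap]⟩
  have hbase {w : ZMod n × ZMod m} (hw : (lexCycle n m).Adj v w) :
      ∃ k : ℤ, (σ₂ ^ k) (stripProj n h (2, 0)) = w := by
    obtain hw | hw := lexCycle_adj_fst hw
    · exact hfibre (by rw [hw, hv, one_add_one_eq_two])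
    · have hσ₂ : (σ₂ w).1 = 2 := by
        have hw0 : w.1 = 0 := by simpa [hv] using hw
        simp [apply_fst_of_semiconj h₂, hw0]
      obtain ⟨k, hk⟩ := hfibre hσ₂
      exact ⟨-1 + k, by rw [zpow_add, Equiv.Perm.mul_apply, hk]; simp⟩
  obtain ⟨k, rfl⟩ := hbase hw
  obtain ⟨l, rfl⟩ := hbase hw'
  exact ⟨l - k, by rw [← Equiv.Perm.mul_apply, ← zpow_add, sub_add_cancel]⟩

lemma exists_mem_closure_semiconj_fibre_reflection [NeZero n] [NeZero m] (hh : h + h = 1)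
    (h₁ : Semiconj (stripProj n h) (stripMap 1 1 1 0) σ₁)
    (h₂ : Semiconj (stripProj n h) (stripMap (-1) 2 (-1) (antiperiodicExt 1 1)) σ₂)
    (a b : ZMod m) :
    ∃ g ∈ Subgroup.closure {σ₁, σ₂},
      Semiconj (stripProj n h) (stripMap 1 0 (-1) (antiperiodicExt a b)) g := by
  obtain ⟨g, hg, hgab⟩ := exists_mem_closure_semiconj_translation hh h₁ h₂ a b
  have hrot := h₁.iterate_right n
  rw [iterate_stripMap_rotation, Equiv.Perm.iterate_eq_pow] at hrot
  refine ⟨g * σ₁ ^ n, mul_mem hg (pow_mem (Subgroup.subset_closure (by simp)) n), ?_⟩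
  rintro ⟨x, J⟩
  have hturn := stripProj_add_mul (NeZero.ne n) h x 1 J
  rw [mul_one, Int.negOnePow_one] at hturn
  rw [Equiv.Perm.mul_apply, ← hrot]
  simp only [stripMap, Units.val_one, one_mul, one_smul, Pi.zero_apply, add_zero]
  rw [hturn, ← hgab]
  simp [stripMap]

lemma natCard_arc_stabilizer (hn : 2 < n) (hm : 1 < m) (hh : h + h = 1)
    (h₁ : Semiconj (stripProj n h) (stripMap 1 1 1 0) σ₁)
    (h₂ : Semiconj (stripProj n h) (stripMap (-1) 2 (-1) (antiperiodicExt 1 1)) σ₂)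
    (J L : ZMod m) :
    Nat.card {g : Equiv.Perm (ZMod n × ZMod m) | g ∈ Subgroup.closure {σ₁, σ₂} ∧
      g (stripProj n h (1, J)) = stripProj n h (1, J) ∧
      g (stripProj n h (2, L)) = stripProj n h (2, L)} = 2 := by
  have : NeZero n := ⟨by omega⟩
  have : NeZero m := ⟨by omega⟩
  obtain ⟨ι, hι, hιlift⟩ :=
    exists_mem_closure_semiconj_fibre_reflection hh h₁ h₂ (J + J) (L + L)
  have hne : 1 ≠ ι := by
    rintro rfl
    have hfix (K : ZMod m) : -K + (J + J) = K := stripProj_right_injective n h 1 <| by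
      simpa [stripMap] using hιlift (1, K)
    have : Fact (1 < m) := ⟨hm⟩
    refine one_ne_zero (α := ZMod m) ?_
    linear_combination h * hfix 0 - h * hfix 1 - hh
  have hset : {g : Equiv.Perm (ZMod n × ZMod m) | g ∈ Subgroup.closure {σ₁, σ₂} ∧
      g (stripProj n h (1, J)) = stripProj n h (1, J) ∧
      g (stripProj n h (2, L)) = stripProj n h (2, L)} = {1, ι} := by
    ext g
    constructor
    · rintro ⟨hg, hgJ, hgL⟩
      exact (eq_one_or_semiconj_of_fixes_arc hn (closure_le_stripSubgroup h₁ h₂ hg) hgJ hgL).imp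
        id fun hglift => eq_of_semiconj_stripProj hglift hιlift
    · rintro (rfl | rfl)
      · exact ⟨one_mem _, rfl, rfl⟩
      · refine ⟨hι, ?_, ?_⟩ <;> rw [← hιlift] <;> simp [stripMap]
  rw [hset, Nat.card_coe_set_eq, Set.ncard_pair hne]

end Generators

lemma mul_mod_four_eq_two {s m : ℕ} (hs : s % 4 = 2) (hm : Odd m) : s * m % 4 = 2 := by
  obtain h | h := Nat.odd_mod_four_iff.1 (Nat.odd_iff.1 hm) <;> rw [Nat.mul_mod, hs, h]

theorem statement16_general
    (m n : ℕ) (hm : 1 < m) (hmo : Odd m) (hn : 2 < n) (hn4 : n % 4 = 2)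
    (σ₁ σ₂ : Equiv.Perm (ZMod n × ZMod m))
    (hσ₁ : ∀ (i : ZMod n) (j : ZMod m),
      σ₁ (i, j) = if i = 0 then (i + 1, 1 - j) else (i + 1, j))
    (hσ₂ : ∀ (i : ZMod n) (j : ZMod m),
      σ₂ (i, j) = if i = 1 then (2 - i, 2 - j)
        else if zrep i % 4 = 0 ∨ zrep i % 4 = 3 then (2 - i, j + 1) else (2 - i, j - 1))
    :
    σ₂ ((1, 1) : ZMod n × ZMod m) = (1, 1) ∧
      (∀ w w' : ZMod n × ZMod m,
        (lexCycle n m).Adj ((1, 1) : ZMod n × ZMod m) w →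
        (lexCycle n m).Adj ((1, 1) : ZMod n × ZMod m) w' →
        ∃ k : ℤ, (σ₂ ^ k) w = w') ∧
      (∀ u₁ w₁ u₂ w₂ : ZMod n × ZMod m,
        (lexCycle n m).Adj u₁ w₁ → (lexCycle n m).Adj u₂ w₂ →
        ∃ g ∈ Subgroup.closure {σ₁, σ₂}, g u₁ = u₂ ∧ g w₁ = w₂) ∧
      Nat.card {g : Equiv.Perm (ZMod n × ZMod m) |
        g ∈ Subgroup.closure {σ₁, σ₂} ∧
        g ((1, 1) : ZMod n × ZMod m) = (1, 1) ∧
        g ((2, 1) : ZMod n × ZMod m) = (2, 1)} = 2 := by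
  have : NeZero n := ⟨by omega⟩
  have : NeZero m := ⟨by omega⟩
  obtain ⟨h, hh⟩ := exists_add_self_eq_one hmo
  have h₁ := semiconj_of_rotation_formula (NeZero.ne n) hh hσ₁
  have h₂ := semiconj_of_reflection_formula hn4 hh hσ₂
  have hv : stripProj n h (1, h) = (1, 1) := by
    rw [stripProj_of_mem_Icc ⟨le_rfl, by omega⟩, hh, Int.cast_one]
  have hw : stripProj n h (2, h) = (2, 1) := by
    rw [stripProj_of_mem_Icc ⟨one_le_two, by omega⟩, hh, Int.cast_ofNat]
  refine ⟨?_, fun w w' => exists_zpow_map_neighbor_eq hh h₂ rfl,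
    fun u₁ w₁ u₂ w₂ => exists_map_arc_eq hh h₁ h₂, ?_⟩
  · rw [hσ₂, if_pos rfl]
    norm_num
  · simpa only [hv, hw] using natCard_arc_stabilizer hn hm hh h₁ h₂ h h

theorem statement16
    (m s n : ℕ) (hm : 3 ≤ m) (hmo : Odd m) (hs : 0 < s) (hs4 : s % 4 = 2) (hn : n = s * m)
    (σ₁ σ₂ : Equiv.Perm (ZMod n × ZMod m))
    (hσ₁ : ∀ (i : ZMod n) (j : ZMod m),
      σ₁ (i, j) = if i = 0 then (i + 1, 1 - j) else (i + 1, j))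
    (hσ₂ : ∀ (i : ZMod n) (j : ZMod m),
      σ₂ (i, j) = if i = 1 then (2 - i, 2 - j)
        else if zrep i % 4 = 0 ∨ zrep i % 4 = 3 then (2 - i, j + 1) else (2 - i, j - 1))
    :
    σ₂ ((1, 1) : ZMod n × ZMod m) = (1, 1) ∧
      (∀ w w' : ZMod n × ZMod m,
        (lexCycle n m).Adj ((1, 1) : ZMod n × ZMod m) w →
        (lexCycle n m).Adj ((1, 1) : ZMod n × ZMod m) w' →
        ∃ k : ℤ, (σ₂ ^ k) w = w') ∧
      (∀ u₁ w₁ u₂ w₂ : ZMod n × ZMod m,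
        (lexCycle n m).Adj u₁ w₁ → (lexCycle n m).Adj u₂ w₂ →
        ∃ g ∈ Subgroup.closure {σ₁, σ₂}, g u₁ = u₂ ∧ g w₁ = w₂) ∧
      Nat.card {g : Equiv.Perm (ZMod n × ZMod m) |
        g ∈ Subgroup.closure {σ₁, σ₂} ∧
        g ((1, 1) : ZMod n × ZMod m) = (1, 1) ∧
        g ((2, 1) : ZMod n × ZMod m) = (2, 1)} = 2 := by
  exact statement16_general m n (by omega) hmo (by nlinarith)
    (hn ▸ mul_mod_four_eq_two hs4 hmo) σ₁ σ₂ hσ₁ hσ₂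
end

section
/- The permutation ζ defined by ζ(i,j) = (2−i, j) is an involutory automorphism of Γ that fixes the vertex (1,1) and satisfies ζη₁ζ = η₁⁻¹ and ζη₂ζ = η₂⁻¹; in particular ζ normalises the subgroup ⟨η₁, η₂⟩. -/
/-! Composing `ζ` with `η₁` or `η₂` gives an involution: `ζη₁` is `(i, j) ↦ (1 - i, 2 - j)`, and
`ζη₂` reflects each fibre `{i} × ZMod m` onto itself, whatever shift is attached to that fibre.
That `ζη` squares to the identity says exactly that `ζηζ = η⁻¹`. -/

theorem mem_normalizer_closure_of_conj_eq_inv {G : Type*} [Group G] {S : Set G} {z : G}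
    (hS : ∀ x ∈ S, z * x * z⁻¹ = x⁻¹) :
    z ∈ Subgroup.normalizer (Subgroup.closure S : Set G) := by
  have conj_image : MulAut.conj z '' S = S⁻¹ :=
    (Set.image_congr hS).trans Set.image_inv_eq_inv
  rw [Subgroup.mem_normalizer_iff_map_conj_eq, MonoidHom.map_closure, MonoidHom.coe_coe,
    conj_image, Subgroup.closure_inv]

section ProductReflections

variable {I J : Type*} [AddCommGroup I]

/-- The reflection `(i, j) ↦ (a - i, j)` of the first coordinate; `ζ` is the case `a = 2`. -/
def baseReflection (a : I) : Equiv.Perm (I × J) :=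
  (Equiv.subLeft a).prodCongr (Equiv.refl J)

@[simp]
theorem baseReflection_apply (a i : I) (j : J) : baseReflection a (i, j) = (a - i, j) := rfl

theorem baseReflection_apply_eq_self_iff {a i : I} {j : J} :
    baseReflection a (i, j) = (i, j) ↔ a = i + i := by
  simp only [baseReflection_apply, Prod.mk.injEq, and_true, sub_eq_iff_eq_add]

theorem baseReflection_mul_self (a : I) :
    (baseReflection a * baseReflection a : Equiv.Perm (I × J)) = 1 := by
  ext1 ⟨i, j⟩
  simp

theorem inv_baseReflection (a : I) :
    (baseReflection a : Equiv.Perm (I × J))⁻¹ = baseReflection a :=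
  inv_eq_of_mul_eq_one_left (baseReflection_mul_self a)

variable [AddCommGroup J]

/-- The glide reflection `(i, j) ↦ (i + d, b - j)`; `η₁` is the case `d = 1`, `b = 2`. -/
def glideReflection (d : I) (b : J) : Equiv.Perm (I × J) :=
  (Equiv.addRight d).prodCongr (Equiv.subLeft b)

/-- The permutation `(i, j) ↦ (a - i, c i - j)`, whose centre of reflection in the second
coordinate depends on the fibre; `η₂` is the case `a = 2`, `c i = 2 + ⌊(ī - 1) / 2⌋`. -/
def twistedReflection (a : I) (c : I → J) : Equiv.Perm (I × J) :=
  (Equiv.subLeft a).prodShear fun i => Equiv.subLeft (c i)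

@[simp]
theorem glideReflection_apply (d i : I) (b j : J) :
    glideReflection d b (i, j) = (i + d, b - j) := rfl

@[simp]
theorem twistedReflection_apply (a i : I) (c : I → J) (j : J) :
    twistedReflection a c (i, j) = (a - i, c i - j) := rfl

theorem baseReflection_conj_glideReflection (a d : I) (b : J) :
    baseReflection a * glideReflection d b * baseReflection a = (glideReflection d b)⁻¹ := by
  refine eq_inv_of_mul_eq_one_left ?_
  ext1 ⟨i, j⟩
  simp [sub_add_eq_sub_sub]

theorem baseReflection_conj_twistedReflection (a : I) (c : I → J) :
    baseReflection a * twistedReflection a c * baseReflection a =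
      (twistedReflection a c)⁻¹ := by
  refine eq_inv_of_mul_eq_one_left ?_
  ext1 ⟨i, j⟩
  simp

end ProductReflections

theorem lexCycle_adj {n m : ℕ} {u v : ZMod n × ZMod m} :
    (lexCycle n m).Adj u v ↔ u ≠ v ∧ (v.1 = u.1 + 1 ∨ u.1 = v.1 + 1) :=
  SimpleGraph.fromRel_adj _ u v

theorem sub_left_eq_sub_left_add_iff {A : Type*} [AddCommGroup A] {a x y d : A} :
    a - x = a - y + d ↔ y = x + d := by
  rw [sub_add_eq_add_sub, sub_eq_sub_iff_add_eq_add, add_assoc, add_right_inj, add_comm d x]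

theorem lexCycle_adj_baseReflection {n m : ℕ} (a : ZMod n) (u v : ZMod n × ZMod m) :
    (lexCycle n m).Adj (baseReflection a u) (baseReflection a v) ↔ (lexCycle n m).Adj u v := by
  obtain ⟨i, j⟩ := u
  obtain ⟨k, l⟩ := v
  rw [lexCycle_adj, lexCycle_adj, (baseReflection a).injective.ne_iff]
  simp only [baseReflection_apply, sub_left_eq_sub_left_add_iff, or_comm]

theorem statement18_general {m n : ℕ} (f : ZMod n → ZMod m)
    (η₁ η₂ ζ : Equiv.Perm (ZMod n × ZMod m))
    (hη₁ : ∀ (i : ZMod n) (j : ZMod m), η₁ (i, j) = (i + 1, 2 - j))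
    (hη₂ : ∀ (i : ZMod n) (j : ZMod m), η₂ (i, j) = (2 - i, 2 - j + f i))
    (hζ : ∀ (i : ZMod n) (j : ZMod m), ζ (i, j) = (2 - i, j)) :
    (∀ u v : ZMod n × ZMod m, (lexCycle n m).Adj (ζ u) (ζ v) ↔ (lexCycle n m).Adj u v) ∧
      ζ * ζ = 1 ∧ ζ ((1, 1) : ZMod n × ZMod m) = (1, 1) ∧
      ζ * η₁ * ζ = η₁⁻¹ ∧ ζ * η₂ * ζ = η₂⁻¹ ∧
      ∀ g ∈ Subgroup.closure {η₁, η₂}, ζ * g * ζ ∈ Subgroup.closure {η₁, η₂} := by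
  obtain rfl : ζ = baseReflection 2 := Equiv.ext fun ⟨i, j⟩ => hζ i j
  obtain rfl : η₁ = glideReflection 1 2 := Equiv.ext fun ⟨i, j⟩ => hη₁ i j
  obtain rfl : η₂ = twistedReflection 2 fun i => 2 + f i :=
    Equiv.ext fun ⟨i, j⟩ => by rw [hη₂, twistedReflection_apply, sub_add_eq_add_sub]
  have conj_η₁ := baseReflection_conj_glideReflection (2 : ZMod n) 1 (2 : ZMod m)
  have conj_η₂ := baseReflection_conj_twistedReflection (2 : ZMod n) fun i => 2 + f i
  refine ⟨lexCycle_adj_baseReflection 2, baseReflection_mul_self 2,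
    baseReflection_apply_eq_self_iff.mpr one_add_one_eq_two.symm, conj_η₁, conj_η₂,
    fun g hg => ?_⟩
  have normalizes := mem_normalizer_closure_of_conj_eq_inv (z := baseReflection (2 : ZMod n))
    (S := {glideReflection 1 (2 : ZMod m), twistedReflection 2 fun i => 2 + f i}) <| by
      rw [inv_baseReflection]
      rintro x (rfl | rfl)
      exacts [conj_η₁, conj_η₂]
  simpa only [inv_baseReflection] using (Subgroup.mem_normalizer_iff.mp normalizes g).mp hg

theorem statement18
    (m s n : ℕ) (hm : 3 ≤ m) (hmo : Odd m) (hs : 0 < s) (hs4 : s % 4 = 2) (hn : n = s * m)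
    (η₁ η₂ ζ : Equiv.Perm (ZMod n × ZMod m))
    (hη₁ : ∀ (i : ZMod n) (j : ZMod m), η₁ (i, j) = (i + 1, 2 - j))
    (hη₂ : ∀ (i : ZMod n) (j : ZMod m),
      η₂ (i, j) = (2 - i, 2 - j + (((zrep i - 1) / 2 : ℕ) : ZMod m)))
    (hζ : ∀ (i : ZMod n) (j : ZMod m), ζ (i, j) = (2 - i, j)) :
    (∀ u v : ZMod n × ZMod m, (lexCycle n m).Adj (ζ u) (ζ v) ↔ (lexCycle n m).Adj u v) ∧
      ζ * ζ = 1 ∧ ζ ((1, 1) : ZMod n × ZMod m) = (1, 1) ∧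
      ζ * η₁ * ζ = η₁⁻¹ ∧ ζ * η₂ * ζ = η₂⁻¹ ∧
      ∀ g ∈ Subgroup.closure {η₁, η₂}, ζ * g * ζ ∈ Subgroup.closure {η₁, η₂} :=
  statement18_general _ η₁ η₂ ζ hη₁ hη₂ hζ
end
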